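/- Let Γ be a finitely generated and recursively presented group which admits a normal subgroup Δ ⊴ Γ that is self-simulable (in particular Δ is finitely generated). Then Γ is self-simulable. -/

import Mathlib

open scoped Pointwise

namespace SelfSim

/-- The left shift action of a group `G` on the full shift `G → A`:
`(g · x)(h) = x (g⁻¹ h)`. -/
def shift {G A : Type*} [Group G] (g : G) (x : G → A) : G → A := fun h => x (g⁻¹ * h)

/-- A `G`-subshift: a closed, shift-invariant subset of the full shift `G → A`
(`A` carrying its topology, `G → A` the product topology). -/
def IsSubshift {G A : Type*} [Group G] [TopologicalSpace A] (X : Set (G → A)) : Prop :=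
  IsClosed X ∧ ∀ (g : G) (x : G → A), x ∈ X → shift g x ∈ X

/-- A subshift of finite type: there are a finite set `F ⊆ G` and a set `𝓛` of patterns
on `F` such that `x ∈ X` iff every translate of `x` restricted to `F` lies in `𝓛`. -/
def IsSFT {G A : Type*} [Group G] (X : Set (G → A)) : Prop :=
  ∃ (F : Finset G) (L : Set (↥F → A)),
    ∀ x : G → A, x ∈ X ↔ ∀ g : G, (fun h : ↥F => x (g * (h : G))) ∈ L

/-- `φ` is a topological factor map from the shift action on `Z ⊆ G → A` onto the
action `act` of `G` on `Y ⊆ β`: continuous on `Z`, mapping `Z` into and onto `Y`,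
and equivariant. -/
def IsFactorMapOnto {G A β : Type*} [Group G] [TopologicalSpace A] [TopologicalSpace β]
    (Z : Set (G → A)) (φ : (G → A) → β) (act : G → β → β) (Y : Set β) : Prop :=
  ContinuousOn φ Z ∧ Set.MapsTo φ Z Y ∧ Set.SurjOn φ Z Y ∧
    ∀ (g : G) (x : G → A), x ∈ Z → φ (shift g x) = act g (φ x)

/-- A sofic subshift: a topological factor of some subshift of finite type
(over some finite alphabet, which we may take to be `Fin k`). -/
def IsSofic {G A : Type*} [Group G] [TopologicalSpace A] (Y : Set (G → A)) : Prop :=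
  ∃ (k : ℕ) (Z : Set (G → Fin k)) (φ : (G → Fin k) → (G → A)),
    IsSFT Z ∧ IsFactorMapOnto Z φ shift Y

/-- Recursively enumerable predicate. -/
def RE {α : Type*} [Primcodable α] (p : α → Prop) : Prop :=
  Partrec fun a => Part.assert (p a) fun _ => Part.some ()

/-- `x : ℕ → A` begins with the finite word `w`. -/
def ExtendsWord {A : Type*} (x : ℕ → A) (w : List A) : Prop :=
  ∀ i : Fin w.length, x i = w.get i

/-- A closed subset `Z ⊆ A^ℕ` is effectively closed if the set of words whose
cylinder is disjoint from `Z` is recursively enumerable. -/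
def EffectivelyClosedSet {A : Type*} [Primcodable A] [TopologicalSpace A]
    (Z : Set (ℕ → A)) : Prop :=
  IsClosed Z ∧ RE fun w : List A => ∀ x : ℕ → A, ExtendsWord x w → x ∉ Z

/-- `act` defines an action of `G` on the set `X ⊆ β`. -/
def IsActionOn {G β : Type*} [Group G] (act : G → β → β) (X : Set β) : Prop :=
  (∀ g : G, Set.MapsTo (act g) X X) ∧ (∀ x ∈ X, act 1 x = x) ∧
    ∀ (g h : G) (x : β), x ∈ X → act (g * h) x = act g (act h x)

/-- The set representation of the action `act` of `G` on `X ⊆ A^ℕ` with respect to the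
finite generating tuple `s : Fin m → G` (playing the role of the generating set `S`):
the set of `y ∈ (A^S)^ℕ` of the form `y(n)(s) = (s · x)(n)` for some `x ∈ X`. -/
def SetRep {G A : Type*} [Group G] {m : ℕ} (s : Fin m → G)
    (act : G → (ℕ → A) → ℕ → A) (X : Set (ℕ → A)) : Set (ℕ → (Fin m → A)) :=
  {y | ∃ x ∈ X, ∀ i : Fin m, (fun n => y n i) = act (s i) x}

/-- The action `act` of `G` on the closed set `X ⊆ A^ℕ` is effectively closed with respect
to the finite generating tuple `s` (which contains `1` and generates `G` as a monoid):
its set representation is an effectively closed subset of `(A^S)^ℕ`. -/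
def IsEffClosedActionWith {G A : Type*} [Group G] [Primcodable A] [TopologicalSpace A]
    {m : ℕ} (s : Fin m → G) (act : G → (ℕ → A) → ℕ → A) (X : Set (ℕ → A)) : Prop :=
  IsClosed X ∧ IsActionOn act X ∧ (∃ i, s i = 1) ∧
    Submonoid.closure (Set.range s) = ⊤ ∧
    EffectivelyClosedSet (SetRep s act X)

/-- The action `act` of `G` on `X ⊆ A^ℕ` is effectively closed (with respect to some
finite generating set containing `1`). -/
def IsEffClosedAction {G A : Type*} [Group G] [Primcodable A] [TopologicalSpace A]
    (act : G → (ℕ → A) → ℕ → A) (X : Set (ℕ → A)) : Prop :=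
  ∃ (m : ℕ) (s : Fin m → G), IsEffClosedActionWith s act X

/-- The action `act` of `G` on `X ⊆ A^ℕ` is a topological factor of some `G`-subshift
of finite type. -/
def IsFactorOfSFT {G A : Type*} [Group G] [TopologicalSpace A]
    (act : G → (ℕ → A) → ℕ → A) (X : Set (ℕ → A)) : Prop :=
  ∃ (k : ℕ) (Z : Set (G → Fin k)) (φ : (G → Fin k) → (ℕ → A)),
    IsSFT Z ∧ IsFactorMapOnto Z φ act X

/-- A group `G` is (dynamically) self-simulable if every effectively closed action of `G`
on a closed subset of `{0,1}^ℕ` is a topological factor of a `G`-subshift of finite type. -/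
def SelfSimulable (G : Type*) [Group G] : Prop :=
  ∀ (X : Set (ℕ → Bool)) (act : G → (ℕ → Bool) → ℕ → Bool),
    IsEffClosedAction act X → IsFactorOfSFT act X

/-- Amenability via the Følner condition: for every finite `K` and `δ > 0` there is a
nonempty finite `F` with `|KF △ F| ≤ δ |F|`. -/
def Amenable (G : Type*) [Group G] : Prop :=
  ∀ K : Set G, K.Finite → ∀ δ : ℝ, 0 < δ →
    ∃ F : Set G, F.Finite ∧ F.Nonempty ∧
      ((symmDiff (K * F) F).ncard : ℝ) ≤ δ * F.ncard

/-- A finitely generated group is recursively presented: for some finite tuple generating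
`G` as a monoid, the set of words evaluating to the identity is recursively enumerable. -/
def RecursivelyPresented (G : Type*) [Group G] : Prop :=
  ∃ (m : ℕ) (s : Fin m → G), Submonoid.closure (Set.range s) = ⊤ ∧
    RE fun w : List (Fin m) => (w.map s).prod = 1

/-- A finitely generated group has decidable word problem: for some finite tuple generating
`G` as a monoid, the set of words evaluating to the identity is decidable. -/
def DecidableWordProblem (G : Type*) [Group G] : Prop :=
  ∃ (m : ℕ) (s : Fin m → G), Submonoid.closure (Set.range s) = ⊤ ∧
    ComputablePred fun w : List (Fin m) => (w.map s).prod = 1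

/-- A pattern coding `c` (a finite list of pairs (word over the generators, letter))
holds in the configuration `x` at position `g`: `x (g ⬝ w̲) = a` for every pair `(w, a)`
of `c`. This says exactly that `x ∈ g·[c]`. -/
def PCHolds {G A : Type*} [Group G] {m : ℕ} (s : Fin m → G) (x : G → A) (g : G)
    (c : List (List (Fin m) × A)) : Prop :=
  ∀ p ∈ c, x (g * (p.1.map s).prod) = p.2

/-- A `G`-subshift `X ⊆ A^G` is effectively closed by patterns: for some finite generating
tuple `s`, there is a recursively enumerable set `𝒞` of pattern codings such that `X` is the
set of configurations avoiding every translate of every cylinder `[c]`, `c ∈ 𝒞`. -/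
def EffClosedByPatterns {G A : Type*} [Group G] [Primcodable A] (X : Set (G → A)) : Prop :=
  ∃ (m : ℕ) (s : Fin m → G), Submonoid.closure (Set.range s) = ⊤ ∧
    ∃ 𝒞 : Set (List (List (Fin m) × A)), RE (· ∈ 𝒞) ∧
      X = {x : G → A | ∀ (g : G) (c : List (List (Fin m) × A)), c ∈ 𝒞 → ¬ PCHolds s x g c}

/-- Word metric distance associated to a finite tuple `s` generating `G` as a monoid. -/
noncomputable def wordDist {G : Type*} [Group G] {m : ℕ} (s : Fin m → G) (g h : G) : ℕ :=
  sInf {n : ℕ | ∃ w : List (Fin m), w.length = n ∧ (w.map s).prod = g⁻¹ * h}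

/-- Two finitely generated groups are quasi-isometric (with respect to word metrics given
by some finite generating sets). -/
def QuasiIsometric (G₁ G₂ : Type*) [Group G₁] [Group G₂] : Prop :=
  ∃ (m₁ : ℕ) (s₁ : Fin m₁ → G₁) (m₂ : ℕ) (s₂ : Fin m₂ → G₂),
    Submonoid.closure (Set.range s₁) = ⊤ ∧ Submonoid.closure (Set.range s₂) = ⊤ ∧
    ∃ (f : G₂ → G₁) (A B C : ℝ), 1 ≤ A ∧ 0 ≤ B ∧ 0 ≤ C ∧
      (∀ x y : G₂,
        (1 / A) * (wordDist s₂ x y : ℝ) - B ≤ (wordDist s₁ (f x) (f y) : ℝ) ∧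
        (wordDist s₁ (f x) (f y) : ℝ) ≤ A * (wordDist s₂ x y : ℝ) + B) ∧
      ∀ z : G₁, ∃ x : G₂, (wordDist s₁ z (f x) : ℝ) ≤ C

/-- A finitely presented group: a quotient of a finitely generated free group by the
normal closure of finitely many relators. -/
def FinitelyPresentedGroup (G : Type*) [Group G] : Prop :=
  ∃ (m : ℕ) (f : FreeGroup (Fin m) →* G) (R : Finset (FreeGroup (Fin m))),
    Function.Surjective f ∧ f.ker = Subgroup.normalClosure (R : Set (FreeGroup (Fin m)))

/-- A subgroup `Δ ≤ G` is mediated: there is a finite generating set `T` of `G` such that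
`Δ ∩ tΔt⁻¹` is non-amenable for every `t ∈ T`. -/
def Mediated {G : Type*} [Group G] (Δ : Subgroup G) : Prop :=
  ∃ T : Finset G, Subgroup.closure (T : Set G) = ⊤ ∧
    ∀ t ∈ T, ¬ Amenable ↥(Δ ⊓ Subgroup.map (MulAut.conj t).toMonoidHom Δ)

end SelfSim

namespace SelfSim
/-! ### Part 1: Σ₁ predicates -/

/-- Primitive recursive normal form of recursively enumerable predicates. -/
def Sig {α : Type} [Primcodable α] (p : α → Prop) : Prop :=
  ∃ R : α → ℕ → Prop, PrimrecRel R ∧ ∀ a, p a ↔ ∃ k, R a k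

theorem Sig.re {α : Type} [Primcodable α] {p : α → Prop} (h : Sig p) : RE p := by
  classical
  obtain ⟨R, hR, hp⟩ := h
  have h1 : Partrec₂ (fun (a : α) (k : ℕ) => (Part.some (decide (R a k)) : Part Bool)) :=
    (PrimrecRel.decide hR).to_comp.partrec
  have h2 := Partrec.rfind h1
  have h3 := Partrec.dom_re h2
  refine REPred.of_eq h3 fun a => ?_
  rw [hp]
  refine Iff.trans (Nat.rfind_dom (p := fun k => Part.some (decide (R a k)))) ?_
  simp

theorem RE.sig {α : Type} [Primcodable α] {p : α → Prop} (h : RE p) : Sig p := by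
  obtain ⟨c, hc⟩ := Nat.Partrec.Code.exists_code.1 h
  refine ⟨fun a k => (Nat.Partrec.Code.evaln k c (Encodable.encode a)).isSome = true, ?_, ?_⟩
  · have h1 : Primrec fun x : α × ℕ => Nat.Partrec.Code.evaln x.2 c (Encodable.encode x.1) :=
      Nat.Partrec.Code.primrec_evaln.comp
        ((Primrec.snd.pair (Primrec.const c)).pair (Primrec.encode.comp Primrec.fst))
    exact Primrec.eq.comp (Primrec.option_isSome.comp h1) (Primrec.const true)
  · intro a
    have h2 : (Nat.Partrec.Code.eval c (Encodable.encode a)).Dom ↔ p a := by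
      rw [hc]
      simp [Part.assert, Part.bind]
    rw [← h2, Part.dom_iff_mem]
    simp only [Nat.Partrec.Code.evaln_complete, Option.isSome_iff_exists]
    exact exists_comm

theorem Sig.of_eq {α : Type} [Primcodable α] {p q : α → Prop} (h : Sig p)
    (H : ∀ a, p a ↔ q a) : Sig q := (funext fun a => propext (H a) : p = q) ▸ h

theorem Sig.of_primrec {α : Type} [Primcodable α] {p : α → Prop} (h : PrimrecPred p) :
    Sig p := ⟨fun a _ => p a, h.comp Primrec.fst, fun a => by simp⟩

theorem Sig.comp {α β : Type} [Primcodable α] [Primcodable β] {p : β → Prop} (h : Sig p)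
    {f : α → β} (hf : Primrec f) : Sig fun a => p (f a) := by
  obtain ⟨R, hR, hp⟩ := h
  exact ⟨fun a k => R (f a) k, hR.comp (hf.comp Primrec.fst) Primrec.snd, fun a => hp _⟩

theorem Sig.or {α : Type} [Primcodable α] {p q : α → Prop} (hp : Sig p) (hq : Sig q) :
    Sig fun a => p a ∨ q a := by
  obtain ⟨R, hR, hp⟩ := hp
  obtain ⟨S, hS, hq⟩ := hq
  exact ⟨fun a k => R a k ∨ S a k, PrimrecPred.or hR hS, fun a => by
    simp only [hp, hq, exists_or]⟩

theorem Sig.and {α : Type} [Primcodable α] {p q : α → Prop} (hp : Sig p) (hq : Sig q) :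
    Sig fun a => p a ∧ q a := by
  obtain ⟨R, hR, hp⟩ := hp
  obtain ⟨S, hS, hq⟩ := hq
  refine ⟨fun a k => R a k.unpair.1 ∧ S a k.unpair.2, PrimrecPred.and
    (hR.comp Primrec.fst (Primrec.fst.comp (Primrec.unpair.comp Primrec.snd)))
    (hS.comp Primrec.fst (Primrec.snd.comp (Primrec.unpair.comp Primrec.snd))), fun a => ?_⟩
  simp only [hp, hq]
  constructor
  · rintro ⟨⟨k, hk⟩, l, hl⟩
    exact ⟨Nat.pair k l, by simpa using ⟨hk, hl⟩⟩
  · rintro ⟨k, hk, hl⟩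
    exact ⟨⟨_, hk⟩, _, hl⟩

theorem Sig.ex {α β : Type} [Primcodable α] [Primcodable β] {p : α × β → Prop} (h : Sig p) :
    Sig fun a => ∃ b, p (a, b) := by
  classical
  obtain ⟨R, hR, hp⟩ := h
  refine ⟨fun a k => (Option.casesOn (Encodable.decode (α := β) k.unpair.1) false
    (fun b => decide (R (a, b) k.unpair.2)) : Bool) = true, ?_, fun a => ?_⟩
  · refine Primrec.eq.comp (?_ : Primrec _) (Primrec.const true)
    refine Primrec.option_casesOn
      (Primrec.decode.comp (Primrec.fst.comp (Primrec.unpair.comp Primrec.snd)))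
      (Primrec.const false) ?_
    refine (PrimrecRel.decide hR).comp
      ((Primrec.fst.comp Primrec.fst).pair Primrec.snd)
      (Primrec.snd.comp (Primrec.unpair.comp (Primrec.snd.comp Primrec.fst)))
  · simp only [hp]
    constructor
    · rintro ⟨b, k, hk⟩
      exact ⟨Nat.pair (Encodable.encode b) k, by simpa using hk⟩
    · rintro ⟨k, hk⟩
      revert hk
      cases Encodable.decode (α := β) k.unpair.1 with
      | none => simp
      | some b => exact fun hk => ⟨b, _, by simpa using hk⟩

theorem Sig.all {α β : Type} [Primcodable α] [Primcodable β] {p : β × α → Prop} (h : Sig p) :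
    Sig fun x : List β × α => ∀ b ∈ x.1, p (b, x.2) := by
  obtain ⟨R, hR, hp⟩ := h
  have h1 : PrimrecRel fun (k : ℕ) (y : β × α) => R y k :=
    hR.comp Primrec.snd Primrec.fst
  have h2 : PrimrecRel fun (n : ℕ) (y : β × α) => ∃ k < n, R y k :=
    PrimrecPred.of_eq (h1.exists_mem_list.comp (Primrec.list_range.comp Primrec.fst) Primrec.snd)
      (by simp)
  have h3 : PrimrecRel fun (b : β) (y : α × ℕ) => ∃ k < y.2, R (b, y.1) k :=
    h2.comp (Primrec.snd.comp Primrec.snd)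
      (Primrec.fst.pair (Primrec.fst.comp Primrec.snd))
  have h4 := h3.forall_mem_list
  refine ⟨fun x K => ∀ b ∈ x.1, ∃ k < K, R (b, x.2) k, h4.comp (Primrec.fst.comp Primrec.fst)
    ((Primrec.snd.comp Primrec.fst).pair Primrec.snd), fun x => ?_⟩
  simp only [hp]
  constructor
  · intro hx
    obtain ⟨l, a⟩ := x
    simp only at hx ⊢
    induction l with
    | nil => exact ⟨0, by simp⟩
    | cons b l ih =>
      obtain ⟨K, hK⟩ := ih fun b hb => hx b (List.mem_cons_of_mem _ hb)
      obtain ⟨k, hk⟩ := hx b List.mem_cons_self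
      refine ⟨max K (k + 1), fun c hc => ?_⟩
      rcases List.mem_cons.1 hc with rfl | hc
      · exact ⟨k, by omega, hk⟩
      · obtain ⟨k', h1, h2⟩ := hK c hc
        exact ⟨k', by omega, h2⟩
  · rintro ⟨K, hK⟩ b hb
    obtain ⟨k, -, hk⟩ := hK b hb
    exact ⟨k, hk⟩

/-- The image of a Σ₁ set under a primitive recursive map is Σ₁. -/
theorem Sig.image {α β : Type} [Primcodable α] [Primcodable β] {p : α → Prop} (h : Sig p)
    {f : α → β} (hf : Primrec f) : Sig fun b => ∃ a, p a ∧ b = f a := by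
  have h1 : Sig fun x : β × α => p x.2 := h.comp Primrec.snd
  have h2 : Sig fun x : β × α => x.1 = f x.2 := by
    classical
    exact Sig.of_primrec (Primrec.eq.comp Primrec.fst (hf.comp Primrec.snd))
  exact (h1.and h2).ex

theorem primrec_two_pow : Primrec fun n : ℕ => 2 ^ n := by
  have h : Primrec fun n : ℕ => (Nat.rec 1 (fun _ y => y * 2) n : ℕ) :=
    Primrec.nat_rec₁ 1 (Primrec.nat_mul.comp Primrec.snd (Primrec.const 2))
  refine h.of_eq fun n => ?_
  induction n with
  | zero => rfl
  | succ n ih => simp only [pow_succ, ← ih]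

theorem primrec_testBit : Primrec₂ fun k j : ℕ => Nat.testBit k j := by
  have h : PrimrecRel fun k j : ℕ => k / 2 ^ j % 2 = 1 :=
    Primrec.eq.comp (Primrec.nat_mod.comp (Primrec.nat_div.comp Primrec.fst
      (primrec_two_pow.comp Primrec.snd)) (Primrec.const 2)) (Primrec.const 1)
  exact (PrimrecRel.decide h).of_eq fun k j => by
    rw [Nat.testBit_eq_decide_div_mod_eq]

/-- Compactness: the set of finite partial assignments inconsistent with a Σ₁ family of
forbidden partial assignments is Σ₁. -/
theorem sig_inconsistent {I : Type} [Primcodable I] {F : List (I × Bool) → Prop} (hF : Sig F) :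
    Sig fun l : List (I × Bool) => ¬ ∃ c : I → Bool,
      (∀ f, F f → ¬ ∀ p ∈ f, c p.1 = p.2) ∧ ∀ p ∈ l, c p.1 = p.2 := by
  classical
  -- forbidden assignments including negations of `l`
  have h1 : Sig fun x : List (I × Bool) × List (I × Bool) =>
      F x.2 ∨ ∃ p ∈ x.1, x.2 = [(p.1, !p.2)] := by
    refine (hF.comp Primrec.snd).or (Sig.of_primrec ?_)
    have h : PrimrecRel fun (p : I × Bool) (f : List (I × Bool)) => f = [(p.1, !p.2)] :=
      Primrec.eq.comp Primrec.snd (Primrec.list_cons.comp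
        ((Primrec.fst.comp Primrec.fst).pair (Primrec.not.comp (Primrec.snd.comp Primrec.fst)))
        (Primrec.const []))
    exact h.exists_mem_list
  -- matching against the assignment coded by `k` at level `N`
  have h2 : PrimrecRel fun (f : List (I × Bool)) (x : ℕ × ℕ) =>
      ∀ p ∈ f, Encodable.encode p.1 < x.2 ∧ Nat.testBit x.1 (Encodable.encode p.1) = p.2 := by
    have h : PrimrecRel fun (p : I × Bool) (x : ℕ × ℕ) =>
        Encodable.encode p.1 < x.2 ∧ Nat.testBit x.1 (Encodable.encode p.1) = p.2 := by
      have he : Primrec fun y : (I × Bool) × ℕ × ℕ => Encodable.encode y.1.1 :=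
        Primrec.encode.comp (Primrec.fst.comp Primrec.fst)
      exact PrimrecPred.and (Primrec.nat_lt.comp he (Primrec.snd.comp Primrec.snd))
        (Primrec.eq.comp (primrec_testBit.comp (Primrec.fst.comp Primrec.snd) he)
          (Primrec.snd.comp Primrec.fst))
    exact h.forall_mem_list
  have h3 : Sig fun y : (ℕ × (List (I × Bool) × ℕ)) × List (I × Bool) =>
      (F y.2 ∨ ∃ p ∈ y.1.2.1, y.2 = [(p.1, !p.2)]) ∧
      ∀ p ∈ y.2, Encodable.encode p.1 < y.1.2.2 ∧
        Nat.testBit y.1.1 (Encodable.encode p.1) = p.2 := by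
    refine Sig.and (h1.comp (f := fun y : (ℕ × (List (I × Bool) × ℕ)) × List (I × Bool) =>
      (y.1.2.1, y.2)) ?_) (Sig.of_primrec (h2.comp (f := fun y => y.2)
        (g := fun y : (ℕ × (List (I × Bool) × ℕ)) × List (I × Bool) => (y.1.1, y.1.2.2)) ?_ ?_))
    · exact (Primrec.fst.comp (Primrec.snd.comp Primrec.fst)).pair Primrec.snd
    · exact Primrec.snd
    · exact (Primrec.fst.comp Primrec.fst).pair
        (Primrec.snd.comp (Primrec.snd.comp Primrec.fst))
  have h4 := h3.ex.all
  have h5 := (h4.comp (f := fun y : List (I × Bool) × ℕ => (List.range (2 ^ y.2), y))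
    ((Primrec.list_range.comp (primrec_two_pow.comp Primrec.snd)).pair Primrec.id)).ex
  refine h5.of_eq fun l => ?_
  simp only [List.mem_range]
  constructor
  · rintro ⟨N, hN⟩ ⟨c, hc, hl⟩
    obtain ⟨f, hf, hm⟩ := hN (Nat.ofBits fun i : Fin N =>
      match Encodable.decode (α := I) i with
      | none => false
      | some i => c i) (Nat.ofBits_lt_two_pow _)
    have hm' : ∀ p ∈ f, c p.1 = p.2 := by
      intro p hp
      obtain ⟨h1, h2⟩ := hm p hp
      rw [Nat.testBit_ofBits_lt _ _ h1] at h2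
      simpa using h2
    rcases hf with hf | ⟨p, hp, rfl⟩
    · exact hc f hf hm'
    · have := hm' _ (List.mem_singleton.2 rfl)
      simp [hl p hp] at this
  · intro hno
    let U : ℕ → Set (I → Bool) := fun N => {c | ∃ f,
      (F f ∨ ∃ p ∈ l, f = [(p.1, !p.2)]) ∧ ∀ p ∈ f, Encodable.encode p.1 < N ∧ c p.1 = p.2}
    have hUo : ∀ N, IsOpen (U N) := by
      intro N
      have : U N = ⋃ f ∈ {f : List (I × Bool) | (F f ∨ ∃ p ∈ l, f = [(p.1, !p.2)]) ∧
          ∀ p ∈ f, Encodable.encode p.1 < N}, ⋂ p ∈ f.toFinset, {c | c p.1 = p.2} := by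
        ext c
        simp only [U, Set.mem_ofPred_eq, Set.mem_iUnion, Set.mem_iInter, List.mem_toFinset]
        constructor
        · rintro ⟨f, h1, h2⟩
          exact ⟨f, ⟨h1, fun p hp => (h2 p hp).1⟩, fun p hp => (h2 p hp).2⟩
        · rintro ⟨f, ⟨h1, h2⟩, h3⟩
          exact ⟨f, h1, fun p hp => ⟨h2 p hp, h3 p hp⟩⟩
      rw [this]
      refine isOpen_biUnion fun f _ => isOpen_biInter_finset fun p _ => ?_
      exact (isOpen_discrete ({p.2} : Set Bool)).preimage
        (continuous_apply (A := fun _ : I => Bool) p.1)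
    have hUm : Monotone U := by
      rintro M N hMN c ⟨f, h1, h2⟩
      exact ⟨f, h1, fun p hp => ⟨(h2 p hp).1.trans_le hMN, (h2 p hp).2⟩⟩
    have hUc : Set.univ ⊆ ⋃ N, U N := by
      intro c _
      push Not at hno
      by_cases hF' : ∃ f, F f ∧ ∀ p ∈ f, c p.1 = p.2
      · obtain ⟨f, hf, hm⟩ := hF'
        obtain ⟨N, hN⟩ : ∃ N, ∀ p ∈ f, Encodable.encode p.1 < N := by
          refine ⟨f.toFinset.sup (fun p => Encodable.encode p.1) + 1, fun p hp => ?_⟩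
          exact Nat.lt_succ_of_le (Finset.le_sup (f := fun p : I × Bool => Encodable.encode p.1)
            (List.mem_toFinset.2 hp))
        exact Set.mem_iUnion.2 ⟨N, f, Or.inl hf, fun p hp => ⟨hN p hp, hm p hp⟩⟩
      · push Not at hF'
        obtain ⟨p, hp, hne⟩ := hno c hF'
        refine Set.mem_iUnion.2 ⟨Encodable.encode p.1 + 1, _, Or.inr ⟨p, hp, rfl⟩, ?_⟩
        intro p' hp'
        rw [List.mem_singleton] at hp'
        subst hp'
        refine ⟨Nat.lt_succ_self _, ?_⟩
        revert hne
        cases c p.1 <;> cases p.2 <;> simp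
    obtain ⟨N, hN⟩ := isCompact_univ.elim_directed_cover U hUo hUc hUm.directed_le
    refine ⟨N, fun k _ => ?_⟩
    obtain ⟨f, h1, h2⟩ := hN (Set.mem_univ fun i => Nat.testBit k (Encodable.encode i))
    exact ⟨f, h1, h2⟩

/-! ### Part 2: effectively closed subsets of `(2^(ℕ × ℕ))^G` as systems over a subgroup -/

/-- List of assignments prescribed by a word `v` along the index map `ι`. -/
def assign {I : Type} {r : ℕ} (ι : Fin r → ℕ → I) (v : List (Fin r → Bool)) :
    List (I × Bool) :=
  (List.range v.length).flatMap fun N =>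
    (List.finRange r).map fun a => (ι a N, v.getD N (fun _ => false) a)

theorem assign_iff {I : Type} {r : ℕ} (ι : Fin r → ℕ → I) (v : List (Fin r → Bool))
    (c : I → Bool) :
    (∀ p ∈ assign ι v, c p.1 = p.2) ↔ ExtendsWord (fun N a => c (ι a N)) v := by
  simp only [assign, ExtendsWord, List.mem_flatMap, List.mem_range, List.mem_map,
    List.mem_finRange, true_and]
  constructor
  · intro h i
    funext a
    have := h _ ⟨i, i.2, a, rfl⟩
    simpa using this
  · rintro h p ⟨N, hN, a, rfl⟩
    have := congrFun (h ⟨N, hN⟩) a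
    simp only [List.getD_eq_getElem _ _ hN]
    exact this

theorem primrec_assign {α I : Type} [Primcodable α] [Primcodable I] {r : ℕ}
    {ι : α → Fin r → ℕ → I} (hι : Primrec fun x : (α × Fin r) × ℕ => ι x.1.1 x.1.2 x.2) :
    Primrec fun y : α × List (Fin r → Bool) => assign (ι y.1) y.2 := by
  refine Primrec.list_flatMap (Primrec.list_range.comp (Primrec.list_length.comp Primrec.snd))
    (?_ : Primrec _)
  refine Primrec.list_map (Primrec.const _) (?_ : Primrec _)
  refine Primrec.pair ?_ ?_
  · exact hι.comp (((Primrec.fst.comp (Primrec.fst.comp Primrec.fst)).pair Primrec.snd).pair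
      (Primrec.snd.comp Primrec.fst))
  · exact Primrec.fin_app.comp ((Primrec.list_getD (fun _ => false)).comp
      (Primrec.snd.comp (Primrec.fst.comp Primrec.fst)) (Primrec.snd.comp Primrec.fst))
      Primrec.snd

section words

variable {G : Type*} [Group G] {m : ℕ} (u : Fin m → G)

/-- Evaluation of words. -/
def ev (w : List (Fin m)) : G := (w.map u).prod

theorem ev_append (w w' : List (Fin m)) : ev u (w ++ w') = ev u w * ev u w' := by
  simp [ev]

theorem ev_surj (hu : Submonoid.closure (Set.range u) = ⊤) (g : G) : ∃ w, ev u w = g := by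
  have hg : g ∈ Submonoid.closure (Set.range u) := by rw [hu]; trivial
  induction hg using Submonoid.closure_induction with
  | mem x hx =>
    obtain ⟨i, rfl⟩ := hx
    exact ⟨[i], by simp [ev]⟩
  | one => exact ⟨[], by simp [ev]⟩
  | mul x y _ _ hx hy =>
    obtain ⟨w, rfl⟩ := hx
    obtain ⟨w', rfl⟩ := hy
    exact ⟨w ++ w', ev_append u w w'⟩

theorem sig_ev_eq (hu : Submonoid.closure (Set.range u) = ⊤)
    (hwp : RE fun w : List (Fin m) => (w.map u).prod = 1) :
    Sig fun x : List (Fin m) × List (Fin m) => ev u x.1 = ev u x.2 := by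
  choose inv hinv using fun a => ev_surj u hu (u a)⁻¹
  have h1 : ∀ w : List (Fin m), ev u (w.reverse.flatMap inv) = (ev u w)⁻¹ := by
    intro w
    induction w with
    | nil => simp [ev]
    | cons a w ih =>
      rw [List.reverse_cons, List.flatMap_append, ev_append, ih]
      simp only [List.flatMap_singleton, hinv]
      simp [ev]
  have hp : Primrec fun x : List (Fin m) × List (Fin m) => x.1 ++ x.2.reverse.flatMap inv :=
    Primrec.list_append.comp Primrec.fst
      (Primrec.list_flatMap (Primrec.list_reverse.comp Primrec.snd)
        ((Primrec.dom_finite inv).comp Primrec.snd))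
  refine (hwp.sig.comp hp).of_eq fun x => ?_
  change ev u _ = 1 ↔ _
  rw [ev_append, h1, mul_inv_eq_one]

/-- Index set for observables. -/
abbrev Idx (m : ℕ) : Type := List (Fin m) × (ℕ × ℕ)

/-- Configurations avoiding the forbidden partial assignments in `F`. -/
def Qset (F : List (Idx m × Bool) → Prop) : Set (G → ℕ × ℕ → Bool) :=
  {q | ∀ f, F f → ¬ ∀ p ∈ f, q (ev u p.1.1) p.1.2 = p.2}

theorem sig_Qset (hu : Submonoid.closure (Set.range u) = ⊤)
    (hwp : RE fun w : List (Fin m) => (w.map u).prod = 1)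
    {F : List (Idx m × Bool) → Prop} (hF : Sig F) :
    Sig fun l : List (Idx m × Bool) => ¬ ∃ q ∈ Qset u F,
      ∀ p ∈ l, q (ev u p.1.1) p.1.2 = p.2 := by
  have h1 : Sig fun a : (List (Fin m) × List (Fin m)) × ((ℕ × ℕ) × Bool) =>
      ev u a.1.1 = ev u a.1.2 := (sig_ev_eq u hu hwp).comp Primrec.fst
  have hf : Primrec fun a : (List (Fin m) × List (Fin m)) × ((ℕ × ℕ) × Bool) =>
      ([((a.1.1, a.2.1), a.2.2), ((a.1.2, a.2.1), !a.2.2)] : List (Idx m × Bool)) := by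
    have hj : Primrec fun a : (List (Fin m) × List (Fin m)) × ((ℕ × ℕ) × Bool) => a.2.1 :=
      Primrec.fst.comp Primrec.snd
    have hb : Primrec fun a : (List (Fin m) × List (Fin m)) × ((ℕ × ℕ) × Bool) => a.2.2 :=
      Primrec.snd.comp Primrec.snd
    exact Primrec.list_cons.comp (((Primrec.fst.comp Primrec.fst).pair hj).pair hb)
      (Primrec.list_cons.comp (((Primrec.snd.comp Primrec.fst).pair hj).pair
        (Primrec.not.comp hb)) (Primrec.const []))
  refine (sig_inconsistent (hF.or (h1.image hf))).of_eq fun l => not_congr ?_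
  choose σ hσ using ev_surj u hu
  constructor
  · rintro ⟨c, hc, hl⟩
    have key : ∀ w j, c (σ (ev u w), j) = c (w, j) := by
      intro w j
      by_contra hne
      refine hc _ (Or.inr ⟨((σ (ev u w), w), (j, c (σ (ev u w), j))), hσ _, rfl⟩) ?_
      intro p hp
      simp only [List.mem_cons, List.not_mem_nil, or_false] at hp
      rcases hp with rfl | rfl
      · rfl
      · simp only
        revert hne
        cases c (σ (ev u w), j) <;> cases c (w, j) <;> simp
    refine ⟨fun g j => c (σ g, j), fun f hf hall => hc f (Or.inl hf) fun p hp => ?_,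
      fun p hp => ?_⟩
    · rw [← hall p hp]; exact (key _ _).symm
    · rw [← hl p hp]; exact key _ _
  · rintro ⟨q, hq, hl⟩
    refine ⟨fun i => q (ev u i.1) i.2, ?_, hl⟩
    rintro f (hf | ⟨a, ha, rfl⟩) hall
    · exact hq f hf hall
    · have e1 := hall _ List.mem_cons_self
      have e2 := hall _ (List.mem_cons_of_mem _ List.mem_cons_self)
      simp only [ha] at e1 e2
      rw [e1] at e2
      simp at e2

theorem isClosed_Qset (F : List (Idx m × Bool) → Prop) : IsClosed (Qset u F) := by
  have : Qset u F = ⋂ f ∈ {f | F f}, (⋂ p ∈ f.toFinset,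
      (fun q : G → ℕ × ℕ → Bool => q (ev u p.1.1) p.1.2) ⁻¹' {p.2})ᶜ := by
    ext q
    simp only [Qset, Set.mem_ofPred_eq, Set.mem_iInter, Set.mem_compl_iff, Set.mem_preimage,
      Set.mem_singleton_iff, List.mem_toFinset]
  rw [this]
  refine isClosed_biInter fun f _ => IsOpen.isClosed_compl ?_
  refine isOpen_biInter_finset fun p _ => (isOpen_discrete _).preimage ?_
  fun_prop

/-- The subset `Qset u F`, as a system over the self-simulable subgroup `Δ`, is a factor of
a `Δ`-subshift of finite type. -/
theorem exists_cover (Δ : Subgroup G) (hΔfg : Group.FG ↥Δ) (hΔss : SelfSimulable ↥Δ)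
    (hu : Submonoid.closure (Set.range u) = ⊤)
    (hwp : RE fun w : List (Fin m) => (w.map u).prod = 1)
    {F : List (Idx m × Bool) → Prop} (hF : Sig F)
    (hinv : ∀ (g : G), ∀ q ∈ Qset u F, shift g q ∈ Qset u F) :
    ∃ (k : ℕ) (Z : Set (Δ → Fin k)) (φ : (Δ → Fin k) → (G → ℕ × ℕ → Bool)),
      IsSFT Z ∧ IsFactorMapOnto Z φ (fun (δ : Δ) q => shift (δ : G) q) (Qset u F) := by
  classical
  choose σ hσ using ev_surj u hu
  -- generators of Δ
  obtain ⟨r, d, ⟨i1, hi1⟩, hd⟩ : ∃ (r : ℕ) (d : Fin r → Δ), (∃ i, d i = 1) ∧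
      Submonoid.closure (Set.range d) = ⊤ := by
    have hm : Monoid.FG Δ := Group.fg_iff_monoid_fg.1 hΔfg
    obtain ⟨S, hS⟩ := Monoid.fg_def.1 hm
    let T := insert 1 S
    refine ⟨T.card, fun i => (T.equivFin.symm i : Δ), ?_, ?_⟩
    · exact ⟨T.equivFin ⟨1, Finset.mem_insert_self _ _⟩, by simp⟩
    · rw [eq_top_iff, ← hS]
      refine Submonoid.closure_mono fun x hx => ?_
      exact ⟨T.equivFin ⟨x, Finset.mem_insert_of_mem hx⟩, by simp⟩
  let π : ℕ → Idx m := fun N => (Encodable.decode N).getD ([], (0, 0))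
  have hπ : Primrec π := Primrec.option_getD.comp Primrec.decode (Primrec.const _)
  have hπe : ∀ i, π (Encodable.encode i) = i := by
    intro i
    simp only [π, Encodable.encodek, Option.getD_some]
  let code : (G → ℕ × ℕ → Bool) → ℕ → Bool := fun q N => q (ev u (π N).1) (π N).2
  let dec : (ℕ → Bool) → (G → ℕ × ℕ → Bool) := fun c g j => c (Encodable.encode (σ g, j))
  have hdc : ∀ q, dec (code q) = q := by
    intro q
    funext g j
    simp only [dec, code, hπe, hσ]
  have hcode : Continuous code := by fun_prop
  have hdec : Continuous dec := by fun_prop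
  have hQc : IsCompact (Qset u F) := (isClosed_Qset u F).isCompact
  let act : Δ → (ℕ → Bool) → ℕ → Bool := fun δ c => code (shift (δ : G) (dec c))
  have hsr : SetRep d act (code '' Qset u F) =
      (fun (q : G → ℕ × ℕ → Bool) (N : ℕ) (a : Fin r) => code (shift (d a : G) q) N) ''
        Qset u F := by
    ext y
    constructor
    · rintro ⟨_, ⟨q, hq, rfl⟩, hy⟩
      refine ⟨q, hq, ?_⟩
      funext N a
      have := congrFun (hy a) N
      simp only [act, hdc] at this
      exact this.symm
    · rintro ⟨q, hq, rfl⟩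
      exact ⟨_, ⟨q, hq, rfl⟩, fun a => by simp only [act, hdc]⟩
  have heff : IsEffClosedAction act (code '' Qset u F) := by
    refine ⟨r, d, (hQc.image hcode).isClosed, ⟨?_, ?_, ?_⟩, ⟨i1, hi1⟩, hd, ?_, ?_⟩
    · rintro g _ ⟨q, hq, rfl⟩
      exact ⟨_, hinv g q hq, by simp only [act, hdc]⟩
    · rintro _ ⟨q, hq, rfl⟩
      simp only [act, hdc]
      congr 1
      funext h
      simp [shift]
    · rintro g h _ ⟨q, hq, rfl⟩
      simp only [act, hdc]
      congr 1
      funext x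
      simp [shift, mul_assoc]
    · rw [hsr]
      refine (hQc.image ?_).isClosed
      simp only [code, shift]
      fun_prop
    · rw [hsr]
      let ω : Fin r → List (Fin m) := fun a => σ (d a : G)⁻¹
      have hp : Primrec fun v : List (Fin r → Bool) =>
          assign (fun a N => ((ω a ++ (π N).1, (π N).2) : Idx m)) v := by
        refine (primrec_assign (α := Unit)
          (ι := fun _ a N => ((ω a ++ (π N).1, (π N).2) : Idx m)) ?_).comp
          ((Primrec.const ()).pair Primrec.id)
        have hN : Primrec fun x : (Unit × Fin r) × ℕ => π x.2 := hπ.comp Primrec.snd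
        exact (Primrec.list_append.comp ((Primrec.dom_finite ω).comp
          (Primrec.snd.comp Primrec.fst)) (Primrec.fst.comp hN)).pair (Primrec.snd.comp hN)
      refine (((sig_Qset u hu hwp hF).comp hp).of_eq fun v => ?_).re
      have e : ∀ q : G → ℕ × ℕ → Bool,
          (fun (N : ℕ) (a : Fin r) => q (ev u (ω a ++ (π N).1)) (π N).2) =
          fun (N : ℕ) (a : Fin r) => code (shift (d a : G) q) N := by
        intro q
        funext N a
        simp only [code, shift, ev_append, ω, hσ]
      have h2 : ∀ q : G → ℕ × ℕ → Bool,
          (∀ p ∈ assign (fun a N => ((ω a ++ (π N).1, (π N).2) : Idx m)) v,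
            q (ev u p.1.1) p.1.2 = p.2) ↔
          ExtendsWord (fun (N : ℕ) (a : Fin r) => code (shift (d a : G) q) N) v := by
        intro q
        rw [← e q]
        exact assign_iff _ v (fun i : Idx m => q (ev u i.1) i.2)
      simp only [h2]
      constructor
      · rintro h _ hx ⟨q, hq, rfl⟩
        exact h ⟨q, hq, hx⟩
      · rintro h ⟨q, hq, hx⟩
        exact h _ hx ⟨q, hq, rfl⟩
  obtain ⟨k, Z, φ, hZ, hφc, hφm, hφs, hφe⟩ := hΔss _ _ heff
  refine ⟨k, Z, fun z => dec (φ z), hZ, hdec.comp_continuousOn hφc, ?_, ?_, ?_⟩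
  · intro z hz
    obtain ⟨q, hq, hqz⟩ := hφm hz
    simp only [← hqz, hdc]
    exact hq
  · intro q hq
    obtain ⟨z, hz, hzq⟩ := hφs ⟨q, hq, rfl⟩
    exact ⟨z, hz, by simp only [hzq, hdc]⟩
  · intro δ z hz
    simp only [hφe δ z hz, act, hdc]

end words

/-! ### Part 3: local rules -/

section localrules

/-- A predicate on configurations that only depends on a finite window. -/
def IsLocal {I A : Type*} {β : Sort*} (e : (I → A) → β) : Prop :=
  ∃ M : Finset I, ∀ x y : I → A, (∀ h ∈ M, x h = y h) → e x = e y

theorem isSFT_of_local {G A : Type*} [Group G] {R : (G → A) → Prop} (hR : IsLocal R) :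
    IsSFT {ζ : G → A | ∀ g : G, R (fun h => ζ (g * h))} := by
  obtain ⟨M, hM⟩ := hR
  refine ⟨M, {p | ∃ x : G → A, R x ∧ ∀ h : M, x h = p h}, fun ζ => ?_⟩
  refine forall_congr' fun g => ?_
  constructor
  · intro h
    exact ⟨_, h, fun _ => rfl⟩
  · rintro ⟨x, hx, hxp⟩
    rw [← hM x _ fun h hh => hxp ⟨h, hh⟩]
    exact hx

theorem IsSFT.exists_local {G A : Type*} [Group G] {Z : Set (G → A)} (hZ : IsSFT Z) :
    ∃ R : (G → A) → Prop, IsLocal R ∧ ∀ z, z ∈ Z ↔ ∀ g : G, R (fun h => z (g * h)) := by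
  obtain ⟨F, L, h⟩ := hZ
  refine ⟨fun x => (fun h : F => x h) ∈ L, ⟨F, fun x y hxy => ?_⟩, h⟩
  have : (fun h : F => x h) = fun h : F => y h := funext fun h => hxy h h.2
  simp only [this]

theorem IsSFT.shift_mem {G A : Type*} [Group G] {Z : Set (G → A)} (hZ : IsSFT Z)
    (g : G) {z : G → A} (hz : z ∈ Z) : shift g z ∈ Z := by
  obtain ⟨F, L, h⟩ := hZ
  rw [h] at hz ⊢
  intro g'
  have := hz (g⁻¹ * g')
  simpa only [shift, mul_assoc] using this

theorem IsSFT.isClosed {G A : Type*} [Group G] [Finite A] [TopologicalSpace A]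
    [DiscreteTopology A]
    {Z : Set (G → A)} (hZ : IsSFT Z) : IsClosed Z := by
  obtain ⟨F, L, h⟩ := hZ
  have : Z = ⋂ g : G, (fun (x : G → A) (h : F) => x (g * (h : G))) ⁻¹' L := by
    ext x
    simp only [h, Set.mem_iInter, Set.mem_preimage]
  rw [this]
  refine isClosed_iInter fun g => (isClosed_discrete L).preimage ?_
  fun_prop

theorem exists_local_extension {I A β : Type*} [Finite A] [TopologicalSpace A]
    [DiscreteTopology A] [TopologicalSpace β] [DiscreteTopology β] [Nonempty β]
    {Z : Set (I → A)} (hZ : IsClosed Z) {f : (I → A) → β} (hf : ContinuousOn f Z) :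
    ∃ e : (I → A) → β, IsLocal e ∧ ∀ z ∈ Z, e z = f z := by
  classical
  have h1 : ∀ z ∈ Z, ∃ J : Finset I, ∀ z' ∈ Z, (∀ i ∈ J, z' i = z i) → f z' = f z := by
    intro z hz
    have h2 : f ⁻¹' {f z} ∈ nhdsWithin z Z := hf z hz ((isOpen_discrete _).mem_nhds rfl)
    obtain ⟨U, hU, hUZ⟩ := mem_nhdsWithin_iff_exists_mem_nhds_inter.1 h2
    rw [nhds_pi, Filter.mem_pi] at hU
    obtain ⟨J, hJ, t, ht, htU⟩ := hU
    refine ⟨hJ.toFinset, fun z' hz' hzz' => hUZ ⟨htU fun i hi => ?_, hz'⟩⟩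
    rw [hzz' i (hJ.mem_toFinset.2 hi)]
    exact mem_of_mem_nhds (ht i)
  choose! J hJ using h1
  obtain ⟨T, hT, hcov⟩ := hZ.isCompact.elim_nhds_subcover
    (fun z => {z' | ∀ i ∈ J z, z' i = z i}) (by
      intro z hz
      refine IsOpen.mem_nhds ?_ (fun i _ => rfl)
      have : {z' : I → A | ∀ i ∈ J z, z' i = z i} =
          ⋂ i ∈ J z, (fun z' : I → A => z' i) ⁻¹' {z i} := by
        ext; simp
      rw [this]
      refine isOpen_biInter_finset fun i _ => (isOpen_discrete _).preimage ?_
      fun_prop)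
  let M := T.biUnion J
  have hM : ∀ z ∈ Z, ∀ z' ∈ Z, (∀ i ∈ M, z' i = z i) → f z' = f z := by
    intro z hz z' hz' h
    obtain ⟨t, ht, hzt⟩ := Set.mem_iUnion₂.1 (hcov hz)
    have a1 : f z = f t := hJ t (hT t ht) z hz hzt
    have a2 : f z' = f t := hJ t (hT t ht) z' hz' fun i hi =>
      (h i (Finset.mem_biUnion.2 ⟨t, ht, hi⟩)).trans (hzt i hi)
    rw [a1, a2]
  let P : (I → A) → β → Prop := fun z b => ∃ z' ∈ Z, (∀ i ∈ M, z' i = z i) ∧ f z' = b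
  refine ⟨fun z => Classical.epsilon (P z), ⟨M, fun x y hxy => ?_⟩, fun z hz => ?_⟩
  · have : P x = P y := by
      funext b
      simp only [P]
      refine propext (exists_congr fun z' => and_congr_right fun _ => and_congr_left fun _ => ?_)
      exact forall₂_congr fun i hi => by rw [hxy i hi]
    simp only [this]
  · obtain ⟨z', hz', h1, h2⟩ := Classical.epsilon_spec (p := P z) ⟨f z, z, hz, fun _ _ => rfl, rfl⟩
    refine h2.symm.trans ?_
    exact hM z hz z' hz' h1

end localrules

/-! ### Part 4: pointers, by the marriage theorem -/

theorem exists_pointers {G : Type*} [Group G] {m : ℕ} (u : Fin m → G) (Δ : Subgroup G)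
    (hΔfg : Group.FG ↥Δ) (hΔss : SelfSimulable ↥Δ)
    (hu : Submonoid.closure (Set.range u) = ⊤)
    (hwp : RE fun w : List (Fin m) => (w.map u).prod = 1) :
    ∃ (M : Finset Δ) (p : Δ × Bool → Δ), Function.Injective p ∧
      ∀ x, x.1⁻¹ * p x ∈ M := by
  classical
  obtain ⟨k, Z, φ, hZ, hφc, -, hφs, hφe⟩ := exists_cover u Δ hΔfg hΔss hu hwp
    (F := fun _ => False) (Sig.of_primrec (PrimrecPred.of_eq (p := fun x => x ≠ x)
      (PrimrecPred.not (Primrec.eq.comp Primrec.id Primrec.id)) (by simp)))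
    (fun g q _ f hf => hf.elim)
  have hsurj : ∀ q, ∃ z ∈ Z, φ z = q := fun q => hφs (fun f hf => hf.elim)
  let n := 2 * k + 1
  obtain ⟨e, ⟨M, hM⟩, he⟩ := exists_local_extension (β := Fin n → Bool) hZ.isClosed
    (f := fun z j => φ z 1 (0, (j : ℕ))) (by
      have : Continuous fun (q : G → ℕ × ℕ → Bool) (j : Fin n) => q 1 (0, (j : ℕ)) := by fun_prop
      exact this.comp_continuousOn hφc)
  have hbit : ∀ z ∈ Z, ∀ δ : Δ, ∀ j : Fin n,
      φ z δ (0, (j : ℕ)) = e (fun h => z (δ * h)) j := by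
    intro z hz δ j
    have h1 : shift δ⁻¹ z = fun h => z (δ * h) := by
      funext h; simp [shift]
    rw [← h1, he _ (hZ.shift_mem _ hz), hφe _ _ hz]
    simp [shift]
  have hcard : ∀ E : Finset Δ, 2 * E.card ≤ (E.biUnion fun g => M.image (g * ·)).card := by
    intro E
    set EM := E.biUnion fun g => M.image (g * ·) with hEM
    let q : (E → Fin n → Bool) → (G → ℕ × ℕ → Bool) := fun c =>
      Function.extend (fun δ : E => ((δ : Δ) : G))
        (fun δ a => if h : a.2 < n then c δ ⟨a.2, h⟩ else false) (fun _ _ => false)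
    have hq : ∀ c (δ : E) (j : Fin n), q c ((δ : Δ) : G) (0, (j : ℕ)) = c δ j := by
      intro c δ j
      have hinj : Function.Injective (fun δ : E => ((δ : Δ) : G)) :=
        Subtype.val_injective.comp Subtype.val_injective
      simp only [q]
      rw [hinj.extend_apply (f := fun δ : E => ((δ : Δ) : G)) _ _ δ]
      simp
    choose z hz hzq using fun c => hsurj (q c)
    have hinj : Function.Injective fun (c : E → Fin n → Bool) (x : EM) => z c x := by
      intro c c' hcc
      funext δ j
      rw [← hq c, ← hq c', ← hzq, ← hzq, hbit _ (hz _), hbit _ (hz _)]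
      refine congrFun (hM _ _ fun h hh => ?_) j
      exact congrFun hcc ⟨δ * h, Finset.mem_biUnion.2 ⟨δ, δ.2, Finset.mem_image_of_mem _ hh⟩⟩
    have h1 := Fintype.card_le_of_injective _ hinj
    simp only [Fintype.card_fun, Fintype.card_bool, Fintype.card_fin, Fintype.card_coe] at h1
    have h2 : k ^ EM.card ≤ 2 ^ (k * EM.card) := by
      rw [pow_mul]
      exact Nat.pow_le_pow_left (Nat.lt_two_pow_self).le _
    rw [← pow_mul] at h1
    have h3 : n * E.card ≤ k * EM.card := (Nat.pow_le_pow_iff_right (by norm_num)).1 (h1.trans h2)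
    by_contra hlt
    push Not at hlt
    have h4 : k * EM.card ≤ k * (2 * E.card) := Nat.mul_le_mul_left _ hlt.le
    have h5 : E.card = 0 := by
      simp only [n] at h3
      nlinarith
    omega
  obtain ⟨p, hp, hpm⟩ := (Finset.all_card_le_biUnion_card_iff_exists_injective
    (fun x : Δ × Bool => M.image (x.1 * ·))).1 (by
      intro S
      have h1 : S.card ≤ 2 * (S.image Prod.fst).card := by
        have : S ⊆ (S.image Prod.fst) ×ˢ (Finset.univ : Finset Bool) := by
          intro x hx
          simp only [Finset.mem_product, Finset.mem_univ, and_true]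
          exact Finset.mem_image_of_mem _ hx
        have := Finset.card_le_card this
        rw [Finset.card_product, Finset.card_univ, Fintype.card_bool] at this
        omega
      refine h1.trans ((hcard _).trans (Finset.card_le_card ?_))
      intro y hy
      simp only [Finset.mem_biUnion, Finset.mem_image] at hy ⊢
      obtain ⟨g, ⟨x, hx, rfl⟩, h, hh, rfl⟩ := hy
      exact ⟨x, hx, h, hh, rfl⟩)
  refine ⟨M, p, hp, fun x => ?_⟩
  obtain ⟨h, hh, hx⟩ := Finset.mem_image.1 (hpm x)
  rw [← hx]
  simpa using hh

/-! ### Part 5: the rules of the system -/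

theorem sig_true {α : Type} [Primcodable α] : Sig fun _ : α => True :=
  Sig.of_primrec (PrimrecPred.of_eq (p := fun x : α => x = x)
      (Primrec.eq.comp Primrec.id Primrec.id) (by simp))

/-- The properties of the configurations of the system:
every element carries a pointer of each of the two kinds, the data are
transported along the pointers, and the displayed points form an orbit of the action. -/
structure Good {G : Type*} [Group G] {r κ : ℕ} (s : Fin r → G)
    (act : G → (ℕ → Bool) → ℕ → Bool) (X : Set (ℕ → Bool)) (kk : Fin κ → G)
    (q : G → ℕ × ℕ → Bool) : Prop where
  ptr : ∀ (g : G) (i : Fin 2), ∃ k : Fin κ, q g (2 + (i : ℕ), (k : ℕ)) = true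
  trans : ∀ (g : G) (i : Fin 2) (k : Fin κ) (n : ℕ), q g (2 + (i : ℕ), (k : ℕ)) = true →
    q g ((i : ℕ), n + 1) = q (g * kk k) (0, n)
  rep : ∀ g : G, (fun (n : ℕ) (i : Fin r) => q (g * (s i)⁻¹) (1, n + 1)) ∈ SetRep s act X

theorem exists_word_of_not_mem {A : Type*} [TopologicalSpace A] [DiscreteTopology A]
    {Y : Set (ℕ → A)} (hY : IsClosed Y) {y : ℕ → A} (hy : y ∉ Y) :
    ∃ v : List A, ExtendsWord y v ∧ ∀ x : ℕ → A, ExtendsWord x v → x ∉ Y := by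
  have h1 : Yᶜ ∈ nhds y := hY.isOpen_compl.mem_nhds hy
  rw [nhds_pi, Filter.mem_pi] at h1
  obtain ⟨J, hJ, t, ht, htU⟩ := h1
  obtain ⟨N, hN⟩ := hJ.bddAbove
  refine ⟨List.ofFn fun i : Fin (N + 1) => y i, ?_, ?_⟩
  · intro i
    simp [-List.ofFn_succ]
  · intro x hx
    refine htU fun j hj => ?_
    have hj' : j < N + 1 := Nat.lt_succ_of_le (hN hj)
    have := hx ⟨j, by simpa using hj'⟩
    simp only [List.get_eq_getElem, List.getElem_ofFn] at this
    rw [this]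
    exact mem_of_mem_nhds (ht j)

theorem exists_rules {G : Type*} [Group G] {m r κ : ℕ} (u : Fin m → G)
    (hu : Submonoid.closure (Set.range u) = ⊤) (s : Fin r → G)
    (act : G → (ℕ → Bool) → ℕ → Bool) (X : Set (ℕ → Bool)) (kk : Fin κ → G)
    (hY : EffectivelyClosedSet (SetRep s act X)) :
    ∃ F : List (Idx m × Bool) → Prop, Sig F ∧
      ∀ q : G → ℕ × ℕ → Bool, q ∈ Qset u F ↔ Good s act X kk q := by
  choose σ hσ using ev_surj u hu
  let K : Fin κ → List (Fin m) := fun k => σ (kk k)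
  let inv : Fin r → List (Fin m) := fun i => σ (s i)⁻¹
  let f1 : ((List (Fin m) × Fin 2) × Fin κ) × (ℕ × Bool) → List (Idx m × Bool) := fun a =>
    [((a.1.1.1, (2 + (a.1.1.2 : ℕ), (a.1.2 : ℕ))), true),
     ((a.1.1.1, ((a.1.1.2 : ℕ), a.2.1 + 1)), a.2.2),
     ((a.1.1.1 ++ K a.1.2, (0, a.2.1)), !a.2.2)]
  let f2 : List (Fin m) × Fin 2 → List (Idx m × Bool) := fun a =>
    (List.finRange κ).map fun k : Fin κ => ((a.1, (2 + (a.2 : ℕ), (k : ℕ))), false)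
  let f3 : List (Fin m) × List (Fin r → Bool) → List (Idx m × Bool) := fun a =>
    assign (fun i n => (a.1 ++ inv i, (1, n + 1))) a.2
  have hval : ∀ {l : ℕ}, Primrec fun x : Fin l => (x : ℕ) := fun {l} => Primrec.fin_val
  have hf1 : Primrec f1 := by
    have hw : Primrec fun a : ((List (Fin m) × Fin 2) × Fin κ) × (ℕ × Bool) => a.1.1.1 :=
      Primrec.fst.comp (Primrec.fst.comp Primrec.fst)
    have hi : Primrec fun a : ((List (Fin m) × Fin 2) × Fin κ) × (ℕ × Bool) =>
        (a.1.1.2 : ℕ) := hval.comp (Primrec.snd.comp (Primrec.fst.comp Primrec.fst))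
    have hk : Primrec fun a : ((List (Fin m) × Fin 2) × Fin κ) × (ℕ × Bool) => a.1.2 :=
      Primrec.snd.comp Primrec.fst
    have hn : Primrec fun a : ((List (Fin m) × Fin 2) × Fin κ) × (ℕ × Bool) => a.2.1 :=
      Primrec.fst.comp Primrec.snd
    have hb : Primrec fun a : ((List (Fin m) × Fin 2) × Fin κ) × (ℕ × Bool) => a.2.2 :=
      Primrec.snd.comp Primrec.snd
    exact Primrec.list_cons.comp ((hw.pair ((Primrec.nat_add.comp (Primrec.const 2) hi).pair
        (hval.comp hk))).pair (Primrec.const true))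
      (Primrec.list_cons.comp ((hw.pair (hi.pair (Primrec.succ.comp hn))).pair hb)
      (Primrec.list_cons.comp (((Primrec.list_append.comp hw
        ((Primrec.dom_finite K).comp hk)).pair ((Primrec.const 0).pair hn)).pair
        (Primrec.not.comp hb)) (Primrec.const [])))
  have hf2 : Primrec f2 := by
    refine Primrec.list_map (Primrec.const _) (?_ : Primrec _)
    exact ((Primrec.fst.comp Primrec.fst).pair ((Primrec.nat_add.comp (Primrec.const 2)
      (hval.comp (Primrec.snd.comp Primrec.fst))).pair (hval.comp Primrec.snd))).pair
      (Primrec.const false)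
  have hf3 : Primrec f3 := by
    refine primrec_assign (ι := fun (w : List (Fin m)) i n => ((w ++ inv i, (1, n + 1)) : Idx m))
      ?_
    exact (Primrec.list_append.comp (Primrec.fst.comp Primrec.fst)
      ((Primrec.dom_finite inv).comp (Primrec.snd.comp Primrec.fst))).pair
      ((Primrec.const 1).pair (Primrec.succ.comp Primrec.snd))
  have h3 : Sig fun a : List (Fin m) × List (Fin r → Bool) =>
      ∀ x, ExtendsWord x a.2 → x ∉ SetRep s act X :=
    (RE.sig hY.2).comp Primrec.snd
  refine ⟨_, (sig_true.image hf1).or ((sig_true.image hf2).or (h3.image hf3)), fun q => ?_⟩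
  have e3 : ∀ (w : List (Fin m)) (v : List (Fin r → Bool)),
      (∀ p ∈ f3 (w, v), q (ev u p.1.1) p.1.2 = p.2) ↔
      ExtendsWord (fun (n : ℕ) (i : Fin r) => q (ev u w * (s i)⁻¹) (1, n + 1)) v := by
    intro w v
    have := assign_iff (fun i n => ((w ++ inv i, (1, n + 1)) : Idx m)) v
      (fun i : Idx m => q (ev u i.1) i.2)
    simpa only [f3, ev_append, inv, hσ] using this
  constructor
  · intro hq
    refine ⟨?_, ?_, ?_⟩
    · intro g i
      by_contra hno
      push Not at hno
      refine hq (f2 (σ g, i)) (Or.inr (Or.inl ⟨_, trivial, rfl⟩)) ?_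
      intro p hp
      obtain ⟨k, -, rfl⟩ := List.mem_map.1 hp
      simp only [hσ]
      exact Bool.eq_false_iff.2 (hno k)
    · intro g i k n hk
      by_contra hne
      refine hq (f1 (((σ g, i), k), (n, q g (i, n + 1)))) (Or.inl ⟨_, trivial, rfl⟩) ?_
      intro p hp
      simp only [f1, List.mem_cons, List.not_mem_nil, or_false] at hp
      rcases hp with rfl | rfl | rfl
      · simp only [hσ]; exact hk
      · simp only [hσ]
      · simp only [hσ, ev_append, K]
        revert hne
        cases q g (i, n + 1) <;> cases q (g * kk k) (0, n) <;> simp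
    · intro g
      by_contra hno
      obtain ⟨v, hv, hbad⟩ := exists_word_of_not_mem hY.1 hno
      refine hq (f3 (σ g, v)) (Or.inr (Or.inr ⟨_, hbad, rfl⟩)) ((e3 _ _).2 ?_)
      rw [hσ]
      exact hv
  · rintro hq f (⟨⟨⟨⟨w, i⟩, k⟩, n, b⟩, -, rfl⟩ | ⟨⟨w, i⟩, -, rfl⟩ | ⟨⟨w, v⟩, hbad, rfl⟩) hall
    · have a1 := hall _ List.mem_cons_self
      have a2 := hall _ (List.mem_cons_of_mem _ List.mem_cons_self)
      have a3 := hall _ (List.mem_cons_of_mem _ (List.mem_cons_of_mem _ List.mem_cons_self))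
      simp only [ev_append, K, hσ] at a1 a2 a3
      have := hq.trans _ i k n a1
      rw [a2, a3] at this
      simp at this
    · obtain ⟨k, hk⟩ := hq.ptr (ev u w) i
      have := hall _ (List.mem_map.2 ⟨k, List.mem_finRange k, rfl⟩)
      simp only at this
      rw [hk] at this
      simp at this
    · exact hbad _ ((e3 _ _).1 hall) (hq.rep _)

theorem Good.shift {G : Type*} [Group G] {r κ : ℕ} {s : Fin r → G}
    {act : G → (ℕ → Bool) → ℕ → Bool} {X : Set (ℕ → Bool)} {kk : Fin κ → G}
    {q : G → ℕ × ℕ → Bool} (hq : Good s act X kk q) (g : G) :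
    Good s act X kk (SelfSim.shift g q) := by
  refine ⟨fun h i => hq.ptr _ i, fun h i k n hk => ?_, fun h => ?_⟩
  · have := hq.trans _ i k n hk
    simpa only [SelfSim.shift, mul_assoc] using this
  · have := hq.rep (g⁻¹ * h)
    simpa only [SelfSim.shift, mul_assoc] using this

/-! ### Part 6: the simulation -/

theorem exists_good {G : Type*} [Group G] {r κ : ℕ} {s : Fin r → G}
    {act : G → (ℕ → Bool) → ℕ → Bool} {X : Set (ℕ → Bool)} {kk : Fin κ → G}
    (hact : IsActionOn act X) (pp : G × Bool → G) (hpp : Function.Injective pp)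
    (hkk : ∀ x, ∃ k, pp x = x.1 * kk k) {x : ℕ → Bool} (hx : x ∈ X) :
    ∃ q : G → ℕ × ℕ → Bool, Good s act X kk q ∧ ∀ n, q 1 (1, n + 1) = x n := by
  classical
  let a : G → G := fun g => pp (g, false)
  let b : G → G := fun g => pp (g, true)
  have ha : Function.Injective a := fun g h e => congrArg Prod.fst (hpp e)
  have hb : Function.Injective b := fun g h e => congrArg Prod.fst (hpp e)
  have hab : ∀ g h, a g ≠ b h := fun g h e => by
    have := congrArg Prod.snd (hpp e)
    simp at this
  let node : G × ℕ → G := fun y => a^[y.2] (b y.1)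
  have haux : ∀ (g g' : G) (n d : ℕ), a^[n] (b g) = a^[n + d] (b g') → d = 0 ∧ g = g' := by
    intro g g' n d h
    rw [Function.iterate_add_apply] at h
    have h' := ha.iterate n h
    cases d with
    | zero => exact ⟨rfl, hb h'⟩
    | succ d =>
      rw [Function.iterate_succ_apply'] at h'
      exact (hab _ _ h'.symm).elim
  have hnode : Function.Injective node := by
    rintro ⟨g, n⟩ ⟨g', n'⟩ h
    simp only [node] at h
    rcases le_total n n' with hle | hle
    · obtain ⟨d, rfl⟩ := Nat.exists_eq_add_of_le hle
      obtain ⟨rfl, rfl⟩ := haux _ _ _ _ h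
      rfl
    · obtain ⟨d, rfl⟩ := Nat.exists_eq_add_of_le hle
      obtain ⟨rfl, rfl⟩ := haux _ _ _ _ h.symm
      rfl
  let bit : G → Bool := Function.extend node (fun y => act y.1⁻¹ x y.2) (fun _ => false)
  have hbit : ∀ g n, bit (a^[n] (b g)) = act g⁻¹ x n := fun g n =>
    hnode.extend_apply (fun y => act y.1⁻¹ x y.2) (fun _ => false) (g, n)
  let q : G → ℕ × ℕ → Bool := fun g j =>
    match j with
    | (0, n) => bit (a^[n] g)
    | (1, 0) => false
    | (1, n + 1) => act g⁻¹ x n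
    | (2, n) => decide (∃ k : Fin κ, (k : ℕ) = n ∧ a g = g * kk k)
    | (_ + 3, n) => decide (∃ k : Fin κ, (k : ℕ) = n ∧ b g = g * kk k)
  have q0 : ∀ g n, q g (0, n) = bit (a^[n] g) := fun _ _ => rfl
  have q1 : ∀ g n, q g (1, n + 1) = act g⁻¹ x n := fun _ _ => rfl
  have q2 : ∀ g n, q g (2, n) = decide (∃ k : Fin κ, (k : ℕ) = n ∧ a g = g * kk k) :=
    fun _ _ => rfl
  have q3 : ∀ g n, q g (3, n) = decide (∃ k : Fin κ, (k : ℕ) = n ∧ b g = g * kk k) :=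
    fun _ _ => rfl
  refine ⟨q, ⟨?_, ?_, ?_⟩, ?_⟩
  · intro g i
    fin_cases i
    · obtain ⟨k, hk⟩ := hkk (g, false)
      refine ⟨k, ?_⟩
      change q g (2, (k : ℕ)) = true
      rw [q2, decide_eq_true_iff]
      exact ⟨k, rfl, hk⟩
    · obtain ⟨k, hk⟩ := hkk (g, true)
      refine ⟨k, ?_⟩
      change q g (3, (k : ℕ)) = true
      rw [q3, decide_eq_true_iff]
      exact ⟨k, rfl, hk⟩
  · intro g i k n hk
    fin_cases i
    · change q g (2, (k : ℕ)) = true at hk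
      change q g (0, n + 1) = _
      rw [q2, decide_eq_true_iff] at hk
      obtain ⟨k', hkk', hk'⟩ := hk
      obtain rfl := Fin.ext hkk'
      rw [q0, q0, ← hk', Function.iterate_succ_apply]
    · change q g (3, (k : ℕ)) = true at hk
      change q g (1, n + 1) = _
      rw [q3, decide_eq_true_iff] at hk
      obtain ⟨k', hkk', hk'⟩ := hk
      obtain rfl := Fin.ext hkk'
      rw [q0, q1, ← hk', hbit]
  · intro g
    refine ⟨act g⁻¹ x, hact.1 _ hx, fun i => ?_⟩
    funext n
    simp only [q1]
    rw [mul_inv_rev, inv_inv, hact.2.2 _ _ _ hx]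
  · intro n
    rw [q1, inv_one, hact.2.1 x hx]

theorem Good.compare {G : Type*} [Group G] {r κ : ℕ} {s : Fin r → G}
    {act : G → (ℕ → Bool) → ℕ → Bool} {X : Set (ℕ → Bool)} {Δ : Subgroup G} {kk : Fin κ → Δ}
    {q q' : G → ℕ × ℕ → Bool} (hq : Good s act X (fun k => (kk k : G)) q)
    (hq' : Good s act X (fun k => (kk k : G)) q') (t : G)
    (h : ∀ (δ : Δ) (a : Fin 4) (n : Fin (κ + 1)),
      q (t * δ) ((a : ℕ), (n : ℕ)) = q' δ ((a : ℕ), (n : ℕ))) (n : ℕ) :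
    q t (1, n + 1) = q' 1 (1, n + 1) := by
  have step : ∀ (i : Fin 2) (n : ℕ), (∀ δ : Δ, q (t * δ) (0, n) = q' δ (0, n)) →
      ∀ δ : Δ, q (t * δ) ((i : ℕ), n + 1) = q' δ ((i : ℕ), n + 1) := by
    intro i n ih δ
    obtain ⟨k, hk⟩ := hq'.ptr δ i
    have hk2 := h δ ⟨2 + i, by omega⟩ k.castSucc
    simp only [Fin.val_castSucc] at hk2
    rw [hq.trans _ i k n (hk2.trans hk), hq'.trans _ i k n hk, mul_assoc]
    exact ih (δ * kk k)
  have hE : ∀ (n : ℕ) (δ : Δ), q (t * δ) (0, n) = q' δ (0, n) := by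
    intro n
    induction n with
    | zero => exact fun δ => h δ 0 0
    | succ n ih => exact step 0 n ih
  have := step 1 n (hE n) 1
  simpa using this

theorem IsLocal.comap {I J A : Type*} {β : Sort*} {e : (I → A) → β} (he : IsLocal e)
    (ι : I → J) : IsLocal fun x : J → A => e fun i => x (ι i) := by
  classical
  obtain ⟨M, hM⟩ := he
  exact ⟨M.image ι, fun x y h => hM _ _ fun i hi => h _ (Finset.mem_image_of_mem _ hi)⟩

theorem IsLocal.map₂ {I A : Type*} {β γ θ : Sort*} {e : (I → A) → β} (he : IsLocal e)
    {e' : (I → A) → γ} (he' : IsLocal e') (f : β → γ → θ) :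
    IsLocal fun x => f (e x) (e' x) := by
  classical
  obtain ⟨M, hM⟩ := he
  obtain ⟨M', hM'⟩ := he'
  refine ⟨M ∪ M', fun x y h => ?_⟩
  simp only [hM x y fun i hi => h i (Finset.mem_union_left _ hi),
    hM' x y fun i hi => h i (Finset.mem_union_right _ hi)]

theorem IsLocal.forall_fin {I A : Type*} {r : ℕ} {R : Fin r → (I → A) → Prop}
    (h : ∀ i, IsLocal (R i)) : IsLocal fun x => ∀ i, R i x := by
  classical
  choose M hM using h
  refine ⟨Finset.univ.biUnion M, fun x y hxy => propext (forall_congr' fun i => ?_)⟩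
  rw [hM i x y fun j hj => hxy j (Finset.mem_biUnion.2 ⟨i, Finset.mem_univ _, hj⟩)]

theorem exists_coset_decomposition {G : Type*} [Group G] (Δ : Subgroup G) :
    ∃ (c : G → G) (ρ : G → Δ), (∀ g, c g * ρ g = g) ∧ (∀ g (δ : Δ), c (g * δ) = c g) ∧
      ∀ g (δ : Δ), ρ (g * δ) = ρ g * δ := by
  let c : G → G := fun g => (QuotientGroup.mk g : G ⧸ Δ).out
  have hc : ∀ g, (c g)⁻¹ * g ∈ Δ := by
    intro g
    rw [← QuotientGroup.eq]
    exact Quotient.out_eq _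
  have hcδ : ∀ g (δ : Δ), c (g * δ) = c g := by
    intro g δ
    have : (QuotientGroup.mk (g * (δ : G)) : G ⧸ Δ) = QuotientGroup.mk g := by
      rw [eq_comm, QuotientGroup.eq]
      simp
    simp only [c, this]
  refine ⟨c, fun g => ⟨_, hc g⟩, fun g => by simp, hcδ, fun g δ => ?_⟩
  apply Subtype.ext
  simp [hcδ, mul_assoc]

/-- A finitely generated recursively presented group with a normal
self-simulable (finitely generated) subgroup is self-simulable. -/
theorem selfSimulable_of_normal_selfSimulable
    (G : Type*) [Group G] (hfg : Group.FG G) (hrp : RecursivelyPresented G)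
    (Δ : Subgroup G) (hnorm : Δ.Normal)
    (hΔfg : Group.FG ↥Δ) (hΔss : SelfSimulable ↥Δ) :
    SelfSimulable G := by
  classical
  rintro X act ⟨r, s, hX, hact, ⟨i0, hi0⟩, hs, hY⟩
  obtain ⟨m, u, hu, hwp⟩ := hrp
  obtain ⟨M, p, hp, hpM⟩ := exists_pointers u Δ hΔfg hΔss hu hwp
  obtain ⟨κ, kk, hkk⟩ : ∃ (κ : ℕ) (kk : Fin κ → Δ), ∀ x, ∃ k, p x = x.1 * kk k := by
    refine ⟨M.card, fun k => (M.equivFin.symm k : Δ), fun x => ⟨M.equivFin ⟨_, hpM x⟩, ?_⟩⟩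
    simp
  obtain ⟨c, ρ, hcρ, hc, hρ⟩ := exists_coset_decomposition Δ
  obtain ⟨F, hF, hQ⟩ := exists_rules u hu s act X (fun k => (kk k : G)) hY
  obtain ⟨k, Z, φ, hZ, hφc, hφm, hφs, hφe⟩ := exists_cover u Δ hΔfg hΔss hu hwp hF
    (fun g q hq => (hQ _).2 (((hQ q).1 hq).shift g))
  obtain ⟨e, heloc, he⟩ := exists_local_extension
    (β := Fin r → Fin 4 → Fin (κ + 1) → Bool) hZ.isClosed
    (f := fun z i a n => φ z (s i)⁻¹ ((a : ℕ), (n : ℕ))) (by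
      have : Continuous fun (q : G → ℕ × ℕ → Bool) (i : Fin r) (a : Fin 4)
          (n : Fin (κ + 1)) => q (s i)⁻¹ ((a : ℕ), (n : ℕ)) := by fun_prop
      exact this.comp_continuousOn hφc)
  obtain ⟨R, hRloc, hR⟩ := hZ.exists_local
  let res : (G → Fin k) → G → (Δ → Fin k) := fun ζ g δ => ζ (g * δ)
  let RR : (G → Fin k) → Prop := fun ζ =>
    R (fun δ : Δ => ζ δ) ∧ ∀ i : Fin r,
      e (fun δ : Δ => ζ δ) i = e (fun δ : Δ => ζ ((s i)⁻¹ * δ)) i0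
  have hRR : IsLocal RR := by
    refine (hRloc.comap (fun δ : Δ => (δ : G))).map₂ ?_ And
    refine IsLocal.forall_fin fun i => ?_
    exact (heloc.comap (fun δ : Δ => (δ : G))).map₂
      (heloc.comap (fun δ : Δ => (s i)⁻¹ * (δ : G))) (fun x y => x i = y i0)
  have hmem : ∀ ζ : G → Fin k, (∀ g, RR fun h => ζ (g * h)) ↔
      (∀ g, res ζ g ∈ Z) ∧ ∀ g i, e (res ζ g) i = e (res ζ (g * (s i)⁻¹)) i0 := by
    intro ζ
    have e1 : ∀ g (i : Fin r), (fun δ : Δ => ζ (g * ((s i)⁻¹ * δ))) = res ζ (g * (s i)⁻¹) := by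
      intro g i
      funext δ
      simp only [res, mul_assoc]
    constructor
    · intro h
      refine ⟨fun g => (hR _).2 fun δ => ?_, fun g i => ?_⟩
      · have := (h (g * δ)).1
        simpa only [res, mul_assoc, Subgroup.coe_mul] using this
      · have := (h g).2 i
        simpa only [e1] using this
    · rintro ⟨h1, h2⟩ g
      refine ⟨?_, fun i => ?_⟩
      · have := (hR _).1 (h1 g) 1
        simpa only [res, one_mul] using this
      · simp only [e1]
        exact h2 g i
  have hresδ : ∀ ζ g (δ : Δ), res ζ (g * δ) = shift δ⁻¹ (res ζ g) := by
    intro ζ g δ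
    funext δ'
    simp [res, shift, mul_assoc]
  let Ψ : (G → Fin k) → ℕ → Bool := fun ζ n => φ (res ζ 1) 1 (1, n + 1)
  -- the points displayed along a configuration form an orbit
  have key : ∀ ζ : G → Fin k, (∀ g, RR fun h => ζ (g * h)) →
      (∀ g, (fun n => φ (res ζ g) 1 (1, n + 1)) ∈ X) ∧
      ∀ h g, (fun n => φ (res ζ (g * h⁻¹)) 1 (1, n + 1)) =
        act h (fun n => φ (res ζ g) 1 (1, n + 1)) := by
    intro ζ hζ
    obtain ⟨hz, hrule⟩ := (hmem ζ).1 hζ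
    have hgood : ∀ g, Good s act X (fun k => (kk k : G)) (φ (res ζ g)) :=
      fun g => (hQ _).1 (hφm (hz g))
    have hqδ : ∀ g (δ : Δ) (h : G), φ (res ζ (g * δ)) h = φ (res ζ g) (δ * h) := by
      intro g δ h
      rw [hresδ, hφe _ _ (hz g)]
      simp [shift]
    have hloc : ∀ g i (a : Fin 4) (n : Fin (κ + 1)),
        φ (res ζ g) (s i)⁻¹ ((a : ℕ), (n : ℕ)) =
          φ (res ζ (g * (s i)⁻¹)) 1 ((a : ℕ), (n : ℕ)) := by
      intro g i a n
      have := congrFun (congrFun (hrule g i) a) n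
      rw [he _ (hz _), he _ (hz _)] at this
      simpa only [hi0, inv_one] using this
    have hcmp : ∀ g i n, φ (res ζ g) (s i)⁻¹ (1, n + 1) =
        φ (res ζ (g * (s i)⁻¹)) 1 (1, n + 1) := by
      intro g i
      refine (hgood g).compare (hgood _) _ fun δ a n => ?_
      let δ' : Δ := ⟨(s i)⁻¹ * δ * (s i)⁻¹⁻¹, hnorm.conj_mem _ δ.2 _⟩
      have h1 : (s i)⁻¹ * (δ : G) = δ' * (s i)⁻¹ := by simp [δ']
      rw [h1, ← hqδ, hloc, mul_assoc, ← h1, ← mul_assoc, hqδ, mul_one]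
    have hgen : ∀ g, (fun n => φ (res ζ g) 1 (1, n + 1)) ∈ X ∧ ∀ i,
        (fun n => φ (res ζ (g * (s i)⁻¹)) 1 (1, n + 1)) =
          act (s i) (fun n => φ (res ζ g) 1 (1, n + 1)) := by
      intro g
      obtain ⟨x, hx, hxi⟩ := (hgood g).rep 1
      simp only [one_mul, hcmp] at hxi
      have h0 := hxi i0
      simp only [hi0, inv_one, mul_one] at h0
      rw [hact.2.1 x hx] at h0
      rw [h0]
      exact ⟨hx, hxi⟩
    refine ⟨fun g => (hgen g).1, fun h => ?_⟩
    have hh : h ∈ Submonoid.closure (Set.range s) := by rw [hs]; trivial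
    induction hh using Submonoid.closure_induction with
    | mem h hh =>
      obtain ⟨i, rfl⟩ := hh
      exact fun g => (hgen g).2 i
    | one =>
      intro g
      rw [hact.2.1 _ (hgen g).1, inv_one, mul_one]
    | mul h h' _ _ ih ih' =>
      intro g
      rw [hact.2.2 _ _ _ (hgen g).1, ← ih', ← ih, mul_inv_rev, mul_assoc]
  refine ⟨k, _, Ψ, isSFT_of_local hRR, ?_, ?_, ?_, ?_⟩
  · have h1 : Continuous fun (q : G → ℕ × ℕ → Bool) (n : ℕ) => q 1 (1, n + 1) := by fun_prop
    have h2 : Continuous fun ζ : G → Fin k => res ζ 1 := by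
      simp only [res]
      fun_prop
    exact h1.comp_continuousOn (hφc.comp h2.continuousOn fun ζ hζ => ((hmem ζ).1 hζ).1 1)
  · exact fun ζ hζ => (key ζ hζ).1 1
  · intro x hx
    let pp : G × Bool → G := fun y => c y.1 * p (ρ y.1, y.2)
    have hcc : ∀ g, c (c g) = c g := by
      intro g
      conv_rhs => rw [← hcρ g]
      rw [hc]
    have hpp : Function.Injective pp := by
      rintro ⟨g, b⟩ ⟨g', b'⟩ h
      simp only [pp] at h
      have h1 := congrArg c h
      rw [hc, hc, hcc, hcc] at h1
      rw [h1] at h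
      have h2 := hp (Subtype.ext (mul_left_cancel h))
      simp only [Prod.mk.injEq] at h2
      rw [Prod.mk.injEq, ← hcρ g, ← hcρ g', h1, h2.1]
      exact ⟨rfl, h2.2⟩
    obtain ⟨q, hq, hqx⟩ := exists_good (s := s) (kk := fun k => (kk k : G)) hact pp hpp (by
      rintro ⟨g, b⟩
      obtain ⟨j, hj⟩ := hkk (ρ g, b)
      refine ⟨j, ?_⟩
      simp only [pp, hj, Subgroup.coe_mul]
      rw [← mul_assoc, hcρ]) hx
    choose z hz hzq using fun g : G => hφs ((hQ _).2 (hq.shift g⁻¹))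
    let ζ : G → Fin k := fun g => z (c g) (ρ g)
    have hres : ∀ g, res ζ g = shift (ρ g)⁻¹ (z (c g)) := by
      intro g
      funext δ
      simp [res, ζ, shift, hc, hρ]
    have hφres : ∀ g h, φ (res ζ g) h = q (g * h) := by
      intro g h
      rw [hres, hφe _ _ (hz _), hzq]
      simp only [shift, Subgroup.coe_inv, inv_inv]
      rw [← mul_assoc, hcρ]
    have hresZ : ∀ g, res ζ g ∈ Z := fun g => by
      rw [hres]
      exact hZ.shift_mem _ (hz _)
    refine ⟨ζ, (hmem ζ).2 ⟨hresZ, fun g i => ?_⟩, ?_⟩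
    · rw [he _ (hresZ _), he _ (hresZ _)]
      funext a n
      simp only [hφres, hi0, inv_one, mul_one]
    · funext n
      simp only [Ψ, hφres, mul_one]
      exact hqx n
  · intro h ζ hζ
    have h1 : res (shift h ζ) 1 = res ζ (1 * h⁻¹) := by
      funext δ
      simp [res, shift]
    have := (key ζ hζ).2 h 1
    rw [← h1] at this
    exact this

end SelfSim
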